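/- arXiv:1302.7095 — 2 statements merged into one kernel-verified Lean document; each statement's English description precedes it below -/
import Mathlib

section
/- (Trace property) Let A be a ring with identity, P• and P'• bounded complexes of finitely generated projective right A-modules, and f• : P• → P'• and g• : P'• → P• chain maps. Then Σ_{i∈ℤ} (−1)^i tr_{P^i}(g^i ∘ f^i) = Σ_{i∈ℤ} (−1)^i tr_{P'^i}(f^i ∘ g^i) in A/[A,A]. -/
/-!
A finitely generated projective right module `P` has a finite dual basis `pᵢ ∈ P`,
`eᵢ ∈ Hom_A(P, A)` with `x = ∑ pᵢ · eᵢ x`. It makes `F ↦ ∑ F pᵢ ⊗ eᵢ` a two-sided inverse of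
`φ_P`, so that `tr_P F = ∑ eᵢ (F pᵢ)` modulo commutators (`HSDualBasis.hsTr_eq`). With a second
dual basis `qⱼ, e'ⱼ` of `P'`, expanding `f pᵢ` in the `qⱼ` and `g qⱼ` in the `pᵢ` gives
`tr (g f) = ∑ eᵢ (g qⱼ) * e'ⱼ (f pᵢ)` and `tr (f g) = ∑ e'ⱼ (f pᵢ) * eᵢ (g qⱼ)`, which agree in
`A/[A,A]` (`hsTr_comp_comm`). The two alternating sums therefore agree term by term.
-/

open MulOpposite TensorProduct

section HScore

variable (A : Type*) [Ring A]

/-- The additive subgroup `[A,A]` of `A` generated by all commutators `a*b - b*a`. -/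
def commSub : AddSubgroup A :=
  AddSubgroup.closure {x : A | ∃ a b : A, x = a * b - b * a}

/-- `A/[A,A]`, which is isomorphic to the zeroth Hochschild homology of `A`. -/
abbrev HH0 := A ⧸ commSub A

variable (P : Type*) [AddCommGroup P] [Module Aᵐᵒᵖ P]

/-- The endomorphism `p' ↦ p · f p'` of the right `A`-module `P`. -/
def hsEndo (p : P) (f : P →ₗ[Aᵐᵒᵖ] A) : P →ₗ[Aᵐᵒᵖ] P where
  toFun p' := op (f p') • p
  map_add' x y := by
    show op (f (x + y)) • p = op (f x) • p + op (f y) • p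
    rw [map_add, MulOpposite.op_add, add_smul]
  map_smul' c x := by
    show op (f (c • x)) • p = c • (op (f x) • p)
    rw [map_smul, smul_smul]
    rfl

/-- The bilinear (over `ℤ`) map underlying `φ_P`. -/
def hsPhiBil : P →ₗ[ℤ] (P →ₗ[Aᵐᵒᵖ] A) →ₗ[ℤ] (P →ₗ[Aᵐᵒᵖ] P) :=
  AddMonoidHom.toIntLinearMap <|
    AddMonoidHom.mk'
      (fun p => AddMonoidHom.toIntLinearMap <|
        AddMonoidHom.mk' (fun f => hsEndo A P p f)
          (fun f g => by
            ext x
            show op ((f + g) x) • p = op (f x) • p + op (g x) • p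
            rw [LinearMap.add_apply, MulOpposite.op_add, add_smul]))
      (fun p q => by
        ext f x
        show op (f x) • (p + q) = op (f x) • p + op (f x) • q
        rw [smul_add])

@[simp] lemma hsPhiBil_apply (p : P) (f : P →ₗ[Aᵐᵒᵖ] A) :
    hsPhiBil A P p f = hsEndo A P p f := rfl

/-- The balancing subgroup defining the tensor product `P ⊗_A Hom_A(P,A)`
of the right `A`-module `P` with the left `A`-module `Hom_A(P,A)`. -/
noncomputable def hsBal : AddSubgroup (P ⊗[ℤ] (P →ₗ[Aᵐᵒᵖ] A)) :=
  AddSubgroup.closure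
    {x | ∃ (p : P) (a : A) (f : P →ₗ[Aᵐᵒᵖ] A),
      x = (op a • p) ⊗ₜ[ℤ] f - p ⊗ₜ[ℤ] (a • f)}

/-- The tensor product `P ⊗_A Hom_A(P,A)` over the (possibly noncommutative) ring `A`. -/
abbrev HSTen := (P ⊗[ℤ] (P →ₗ[Aᵐᵒᵖ] A)) ⧸ hsBal A P

/-- `φ_P : P ⊗_A Hom_A(P,A) → End_A(P)`, `p ⊗ f ↦ (p' ↦ p · f p')`. -/
noncomputable def hsPhi : HSTen A P →+ (P →ₗ[Aᵐᵒᵖ] P) :=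
  QuotientAddGroup.lift (hsBal A P) (TensorProduct.lift (hsPhiBil A P)).toAddMonoidHom
    (by
      have h : hsBal A P ≤ (TensorProduct.lift (hsPhiBil A P)).toAddMonoidHom.ker := by
        rw [hsBal, AddSubgroup.closure_le]
        rintro y ⟨p, a, f, rfl⟩
        simp only [SetLike.mem_coe, AddMonoidHom.mem_ker, LinearMap.toAddMonoidHom_coe,
          map_sub, lift.tmul, hsPhiBil_apply, sub_eq_zero]
        ext z
        show op (f z) • (op a • p) = op ((a • f) z) • p
        rw [smul_smul, LinearMap.smul_apply, smul_eq_mul, ← MulOpposite.op_mul]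
      intro x hx
      exact h hx)

/-- `ψ_P : P ⊗_A Hom_A(P,A) → A/[A,A]`, `p ⊗ f ↦ f(p) + [A,A]`. -/
noncomputable def hsPsiBil : P →ₗ[ℤ] (P →ₗ[Aᵐᵒᵖ] A) →ₗ[ℤ] HH0 A :=
  AddMonoidHom.toIntLinearMap <|
    AddMonoidHom.mk'
      (fun p => AddMonoidHom.toIntLinearMap <|
        AddMonoidHom.mk' (fun f : P →ₗ[Aᵐᵒᵖ] A => (QuotientAddGroup.mk (f p) : HH0 A))
          (fun f g => by
            show (QuotientAddGroup.mk ((f + g) p) : HH0 A) = _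
            rw [LinearMap.add_apply, QuotientAddGroup.mk_add]))
      (fun p q => by
        ext f
        show (QuotientAddGroup.mk (f (p + q)) : HH0 A) = QuotientAddGroup.mk (f p) + QuotientAddGroup.mk (f q)
        rw [map_add, QuotientAddGroup.mk_add])

@[simp] lemma hsPsiBil_apply (p : P) (f : P →ₗ[Aᵐᵒᵖ] A) :
    hsPsiBil A P p f = (QuotientAddGroup.mk (f p) : HH0 A) := rfl

noncomputable def hsPsi : HSTen A P →+ HH0 A :=
  QuotientAddGroup.lift (hsBal A P) (TensorProduct.lift (hsPsiBil A P)).toAddMonoidHom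
    (by
      have h : hsBal A P ≤ (TensorProduct.lift (hsPsiBil A P)).toAddMonoidHom.ker := by
        rw [hsBal, AddSubgroup.closure_le]
        rintro y ⟨p, a, f, rfl⟩
        simp only [SetLike.mem_coe, AddMonoidHom.mem_ker, LinearMap.toAddMonoidHom_coe,
          map_sub, lift.tmul, hsPsiBil_apply, sub_eq_zero]
        rw [QuotientAddGroup.eq]
        refine AddSubgroup.subset_closure ⟨a, f p, ?_⟩
        rw [map_smul, LinearMap.smul_apply, smul_eq_mul]
        show -(f p * a) + a * f p = a * f p - f p * a
        abel
      intro x hx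
      exact h hx)

instance : Nonempty (HSTen A P) := ⟨0⟩

/-- The Hattori–Stallings trace `tr_P = ψ_P ∘ φ_P⁻¹ : End_A(P) → A/[A,A]`. -/
noncomputable def hsTr (f : P →ₗ[Aᵐᵒᵖ] P) : HH0 A :=
  hsPsi A P (Function.invFun (hsPhi A P) f)

end HScore

section HSAux

variable {A : Type*} [Ring A] {P : Type*} [AddCommGroup P] [Module Aᵐᵒᵖ P]
  {Q : Type*} [AddCommGroup Q] [Module Aᵐᵒᵖ Q]

/-- The families `p`, `e` form a dual basis of the right `A`-module `P`:
`x = ∑ pᵢ · eᵢ x` for all `x`. -/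
def HSDualBasis {n : ℕ} (p : Fin n → P) (e : Fin n → P →ₗ[Aᵐᵒᵖ] A) : Prop :=
  ∀ x : P, ∑ i, op (e i x) • p i = x

theorem exists_hsDualBasis [Module.Finite Aᵐᵒᵖ P] [Module.Projective Aᵐᵒᵖ P] :
    ∃ (n : ℕ) (p : Fin n → P) (e : Fin n → P →ₗ[Aᵐᵒᵖ] A), HSDualBasis p e := by
  obtain ⟨n, s, r, -, -, h⟩ := Module.Finite.exists_comp_eq_id_of_projective Aᵐᵒᵖ P
  let u : Aᵐᵒᵖ →ₗ[Aᵐᵒᵖ] A :=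
    { toFun := unop, map_add' := fun _ _ => rfl, map_smul' := fun _ _ => rfl }
  refine ⟨n, fun i => s (Pi.single i 1), fun i => u ∘ₗ LinearMap.proj i ∘ₗ r, fun x => ?_⟩
  calc ∑ i, r x i • s (Pi.single i 1) = s (r x) := by
        conv_rhs => rw [pi_eq_sum_univ' (r x)]
        simp only [map_sum, map_smul]
    _ = x := LinearMap.congr_fun h x

namespace HSDualBasis

variable {n : ℕ} {p : Fin n → P} {e : Fin n → P →ₗ[Aᵐᵒᵖ] A}

/-- Expansion of a functional: `f = ∑ f(pᵢ) eᵢ` in the left `A`-module `Hom_A(P, A)`. -/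
theorem functional_eq (h : HSDualBasis p e) (f : P →ₗ[Aᵐᵒᵖ] A) :
    ∑ i, f (p i) • e i = f := by
  ext x
  conv_rhs => rw [← h x]
  simp [map_sum]

/-- The inverse of `φ_P` determined by a dual basis. -/
noncomputable def inv (p : Fin n → P) (e : Fin n → P →ₗ[Aᵐᵒᵖ] A) :
    (P →ₗ[Aᵐᵒᵖ] P) →+ HSTen A P where
  toFun F := QuotientAddGroup.mk (∑ i, F (p i) ⊗ₜ[ℤ] e i)
  map_zero' := by simp
  map_add' F G := by
    simp only [LinearMap.add_apply, TensorProduct.add_tmul, Finset.sum_add_distrib,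
      QuotientAddGroup.mk_add]

theorem hsPhi_inv (h : HSDualBasis p e) (F : P →ₗ[Aᵐᵒᵖ] P) : hsPhi A P (inv p e F) = F := by
  ext x
  have h1 : hsPhi A P (inv p e F) = ∑ i, hsEndo A P (F (p i)) (e i) := by
    change (TensorProduct.lift (hsPhiBil A P)) (∑ i, F (p i) ⊗ₜ[ℤ] e i) = _
    simp [map_sum]
  rw [h1, LinearMap.sum_apply]
  change ∑ i, op (e i x) • F (p i) = F x
  conv_rhs => rw [← h x]
  simp only [map_sum, map_smul]

theorem inv_hsPhi (h : HSDualBasis p e) (t : HSTen A P) : inv p e (hsPhi A P t) = t := by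
  induction t using QuotientAddGroup.induction_on with
  | H z =>
    induction z with
    | zero => exact (map_zero ((inv p e).comp (hsPhi A P)))
    | add x y hx hy =>
      rw [QuotientAddGroup.mk_add, map_add, map_add, hx, hy]
    | tmul q f =>
      have h1 : hsPhi A P (QuotientAddGroup.mk (q ⊗ₜ[ℤ] f)) = hsEndo A P q f := rfl
      rw [h1]
      change (QuotientAddGroup.mk (∑ i, (op (f (p i)) • q) ⊗ₜ[ℤ] e i) : HSTen A P) = _
      conv_rhs => rw [← h.functional_eq f, TensorProduct.tmul_sum]
      rw [← QuotientAddGroup.mk'_apply, ← QuotientAddGroup.mk'_apply, map_sum, map_sum]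
      refine Finset.sum_congr rfl fun i _ => ?_
      rw [← sub_eq_zero, ← map_sub]
      exact (QuotientAddGroup.eq_zero_iff _).2
        (AddSubgroup.subset_closure ⟨q, f (p i), e i, rfl⟩)

/-- The Hattori–Stallings trace in terms of a dual basis. -/
theorem hsTr_eq (h : HSDualBasis p e) (F : P →ₗ[Aᵐᵒᵖ] P) :
    hsTr A P F = QuotientAddGroup.mk (∑ i, e i (F (p i))) := by
  have h1 : hsPhi A P (Function.invFun (hsPhi A P) F) = F :=
    Function.invFun_eq ⟨_, h.hsPhi_inv F⟩
  have h2 : Function.invFun (hsPhi A P) F = inv p e F := by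
    rw [← h.inv_hsPhi (Function.invFun (hsPhi A P) F), h1]
  rw [hsTr, h2]
  change TensorProduct.lift (hsPsiBil A P) (∑ i, F (p i) ⊗ₜ[ℤ] e i) = _
  rw [← QuotientAddGroup.mk'_apply, map_sum, map_sum]
  rfl

/-- Expansion of the value of a functional along a dual basis. -/
theorem apply_eq (h : HSDualBasis p e) (k : P →ₗ[Aᵐᵒᵖ] A) (x : P) :
    k x = ∑ i, k (p i) * e i x := by
  conv_lhs => rw [← h x]
  simp [map_sum]

end HSDualBasis

/-- `tr (g f) = tr (f g)`: both are double sums over the two dual bases, whose terms differ by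
commutators. -/
theorem hsTr_comp_comm [Module.Finite Aᵐᵒᵖ P] [Module.Projective Aᵐᵒᵖ P]
    [Module.Finite Aᵐᵒᵖ Q] [Module.Projective Aᵐᵒᵖ Q]
    (f : P →ₗ[Aᵐᵒᵖ] Q) (g : Q →ₗ[Aᵐᵒᵖ] P) :
    hsTr A P (g ∘ₗ f) = hsTr A Q (f ∘ₗ g) := by
  obtain ⟨n, p, e, h⟩ := exists_hsDualBasis (A := A) (P := P)
  obtain ⟨m, q, e', h'⟩ := exists_hsDualBasis (A := A) (P := Q)
  have h1 : ∑ i, e i ((g ∘ₗ f) (p i)) = ∑ i, ∑ j, e i (g (q j)) * e' j (f (p i)) :=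
    Finset.sum_congr rfl fun i _ => h'.apply_eq (e i ∘ₗ g) (f (p i))
  have h2 : ∑ j, e' j ((f ∘ₗ g) (q j)) = ∑ i, ∑ j, e' j (f (p i)) * e i (g (q j)) := by
    rw [Finset.sum_comm]
    exact Finset.sum_congr rfl fun j _ => h.apply_eq (e' j ∘ₗ f) (g (q j))
  rw [h.hsTr_eq, h'.hsTr_eq, h1, h2, ← sub_eq_zero, ← QuotientAddGroup.mk_sub,
    QuotientAddGroup.eq_zero_iff]
  simp only [← Finset.sum_sub_distrib]
  exact sum_mem fun i _ => sum_mem fun j _ => AddSubgroup.subset_closure ⟨_, _, rfl⟩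

end HSAux

/-- **Trace property.** For bounded complexes `P•`, `P'•` of finitely generated
projective right `A`-modules and chain maps `f• : P• → P'•`, `g• : P'• → P•`, one has
`Σᵢ (−1)ⁱ tr_{Pⁱ}(gⁱ ∘ fⁱ) = Σᵢ (−1)ⁱ tr_{P'ⁱ}(fⁱ ∘ gⁱ)` in `A/[A,A]`. -/
theorem hsTr_trace_property (A : Type*) [Ring A] (P P' : ℤ → Type*)
    [∀ i, AddCommGroup (P i)] [∀ i, Module Aᵐᵒᵖ (P i)]
    [∀ i, Module.Finite Aᵐᵒᵖ (P i)] [∀ i, Module.Projective Aᵐᵒᵖ (P i)]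
    [∀ i, AddCommGroup (P' i)] [∀ i, Module Aᵐᵒᵖ (P' i)]
    [∀ i, Module.Finite Aᵐᵒᵖ (P' i)] [∀ i, Module.Projective Aᵐᵒᵖ (P' i)]
    (hbdd : ∃ N : ℤ, ∀ i : ℤ, N ≤ |i| → Subsingleton (P i))
    (hbdd' : ∃ N : ℤ, ∀ i : ℤ, N ≤ |i| → Subsingleton (P' i))
    (d : ∀ i : ℤ, P i →ₗ[Aᵐᵒᵖ] P (i + 1)) (hd : ∀ i : ℤ, d (i + 1) ∘ₗ d i = 0)
    (d' : ∀ i : ℤ, P' i →ₗ[Aᵐᵒᵖ] P' (i + 1)) (hd' : ∀ i : ℤ, d' (i + 1) ∘ₗ d' i = 0)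
    (f : ∀ i : ℤ, P i →ₗ[Aᵐᵒᵖ] P' i) (hf : ∀ i : ℤ, d' i ∘ₗ f i = f (i + 1) ∘ₗ d i)
    (g : ∀ i : ℤ, P' i →ₗ[Aᵐᵒᵖ] P i) (hg : ∀ i : ℤ, d i ∘ₗ g i = g (i + 1) ∘ₗ d' i) :
    ∑ᶠ i : ℤ, ((Int.negOnePow i : ℤ) • hsTr A (P i) (g i ∘ₗ f i)) =
      ∑ᶠ i : ℤ, ((Int.negOnePow i : ℤ) • hsTr A (P' i) (f i ∘ₗ g i)) := by
  exact finsum_congr fun i => by rw [hsTr_comp_comm]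
end

section
/- Let k be a field, A and B finite-dimensional k-algebras, M a finitely generated A-B-bimodule that is projective as a right B-module, and P• a resolution of M by finitely generated projective A-B-bimodules, with Ω_i(M) the i-th syzygy of M on P• (so Ω_0(M) = M and there are short exact sequences 0 → Ω_i(M) → P^{-i+1} → Ω_{i-1}(M) → 0 of bimodules). Then for all a in the Jacobson radical J of A and all i ∈ ℕ, tr_{M_B}(l_a) = (−1)^i tr_{Ω_i(M)_B}(l_a) in B/[B,B] (each Ω_i(M) being projective as a right B-module). -/
/-!
The proof computes Hattori–Stallings traces with dual bases: if `∑ i, f i x • p i = x` for all `x`,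
then `φ_P` is bijective with inverse `g ↦ ∑ i, g (p i) ⊗ f i`, so `tr_P g` is the class of
`∑ i, f i (g (p i))` (`hsTr_eq_sum`). Additivity and the trace property `tr (h ∘ g) = tr (g ∘ h)`
follow (`hsTr_add`, `hsTr_comp_comm`). A short exact sequence of bimodules with right-projective
quotient splits over `B`, so these two facts make `tr (l_a)` additive on it (`hsTr_of_exact`).

It remains to see that `tr_Q (l_a) = 0` for a finitely generated projective bimodule `Q` and `a` in
the radical (`hsTr_leftMul_projective`). Write `Q` as a retract, via `s` and `r`, of a free bimodule
with basis `e j`, and let `x m` be a `k`-basis of `A`. The elements `(x m ⊗ 1) • r (e j)` belong to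
a dual basis of `Q_B`, whose functionals are `q ↦ (x m)^* ⊗ id` applied to the `j`-th coordinate of
`s q`. With it the trace is a sum over `j` of terms `∑ m, ((x m)^* ⊗ id) ((a x m ⊗ 1) * c j)`,
where `c j` is the `j`-th coordinate of `s (r (e j))`. For `c j = a' ⊗ b` such a term equals
`Tr_k (x ↦ a x a') • b`, and this vanishes because `a` is nilpotent (`sum_slice_leftMul_eq_zero`).
The theorem then follows by induction along the resolution.
-/

open MulOpposite TensorProduct

/-! ### Dual bases and the Hattori–Stallings trace -/

section DualBasis

variable {B : Type*} [Ring B]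

/-- Finite families `p i ∈ P`, `f i ∈ Hom_B(P, B)` with `x = ∑ i, p i · f i x` for all `x`. The
functionals take values in `Bᵐᵒᵖ`, the regular module in the left-module encoding of right
`B`-modules. -/
def IsDualBasis {P : Type*} [AddCommGroup P] [Module Bᵐᵒᵖ P] {ι : Type*} [Fintype ι]
    (p : ι → P) (f : ι → P →ₗ[Bᵐᵒᵖ] Bᵐᵒᵖ) : Prop :=
  ∀ x, ∑ i, f i x • p i = x

/-- A functional with values in `Bᵐᵒᵖ`, regarded as having values in the right `B`-module `B`. -/
def unopFunctional {P : Type*} [AddCommGroup P] [Module Bᵐᵒᵖ P] (f : P →ₗ[Bᵐᵒᵖ] Bᵐᵒᵖ) :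
    P →ₗ[Bᵐᵒᵖ] B where
  toFun x := unop (f x)
  map_add' x y := by simp
  map_smul' c x := by simp

@[simp] lemma unopFunctional_apply {P : Type*} [AddCommGroup P] [Module Bᵐᵒᵖ P]
    (f : P →ₗ[Bᵐᵒᵖ] Bᵐᵒᵖ) (x : P) : unopFunctional f x = unop (f x) := rfl

lemma HH0_mk_mul_comm (x y : B) :
    (QuotientAddGroup.mk (x * y) : HH0 B) = QuotientAddGroup.mk (y * x) := by
  rw [QuotientAddGroup.eq]
  refine AddSubgroup.subset_closure ⟨y, x, ?_⟩
  abel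

lemma HH0_mk_sum {ι : Type*} (s : Finset ι) (g : ι → B) :
    (QuotientAddGroup.mk (∑ i ∈ s, g i) : HH0 B) = ∑ i ∈ s, QuotientAddGroup.mk (g i) :=
  map_sum (QuotientAddGroup.mk' (commSub B)) g s

variable {P : Type*} [AddCommGroup P] [Module Bᵐᵒᵖ P]
variable {ι : Type*} [Fintype ι] {p : ι → P} {f : ι → P →ₗ[Bᵐᵒᵖ] Bᵐᵒᵖ}

/-- The candidate `∑ i, g (p i) ⊗ f i` for `φ_P⁻¹ g`. -/
noncomputable def hsPhiInv (p : ι → P) (f : ι → P →ₗ[Bᵐᵒᵖ] Bᵐᵒᵖ) (g : P →ₗ[Bᵐᵒᵖ] P) :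
    HSTen B P :=
  QuotientAddGroup.mk (∑ i, g (p i) ⊗ₜ[ℤ] unopFunctional (f i))

lemma hsPhi_hsPhiInv (h : IsDualBasis p f) (g : P →ₗ[Bᵐᵒᵖ] P) :
    hsPhi B P (hsPhiInv p f g) = g := by
  have h1 : hsPhi B P (hsPhiInv p f g) = ∑ i, hsEndo B P (g (p i)) (unopFunctional (f i)) := by
    change TensorProduct.lift (hsPhiBil B P) _ = _
    simp
  rw [h1]
  ext x
  rw [LinearMap.sum_apply]
  conv_rhs => rw [← h x, map_sum]
  refine Finset.sum_congr rfl fun i _ => ?_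
  change op (unop (f i x)) • g (p i) = _
  rw [op_unop, map_smul]

lemma hsPhiInv_hsPhi (h : IsDualBasis p f) (t : HSTen B P) :
    hsPhiInv p f (hsPhi B P t) = t := by
  have hadd : ∀ g g', hsPhiInv p f (g + g') = hsPhiInv p f g + hsPhiInv p f g' := by
    intro g g'
    simp only [hsPhiInv, LinearMap.add_apply, TensorProduct.add_tmul, Finset.sum_add_distrib,
      QuotientAddGroup.mk_add]
  have h0 : hsPhiInv p f 0 = 0 := by simp [hsPhiInv]
  obtain ⟨t, rfl⟩ := QuotientAddGroup.mk_surjective t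
  induction t using TensorProduct.induction_on with
  | zero => rw [QuotientAddGroup.mk_zero, map_zero, h0]
  | add s t hs ht => rw [QuotientAddGroup.mk_add, map_add, hadd, hs, ht]
  | tmul q u =>
    have h1 : hsPhi B P (QuotientAddGroup.mk (q ⊗ₜ[ℤ] u)) = hsEndo B P q u := by
      change TensorProduct.lift (hsPhiBil B P) _ = _
      simp
    -- dual functionals expand along the dual basis too
    have hu : u = ∑ i, u (p i) • unopFunctional (f i) := by
      ext x
      conv_lhs => rw [← h x, map_sum]
      rw [LinearMap.sum_apply]
      refine Finset.sum_congr rfl fun i _ => ?_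
      rw [map_smul]
      rfl
    rw [h1, hsPhiInv]
    conv_rhs => rw [hu, TensorProduct.tmul_sum]
    rw [← QuotientAddGroup.mk'_apply, ← QuotientAddGroup.mk'_apply, map_sum, map_sum]
    refine Finset.sum_congr rfl fun i _ => ?_
    rw [QuotientAddGroup.mk'_apply, QuotientAddGroup.mk'_apply, ← sub_eq_zero,
      ← QuotientAddGroup.mk_sub, QuotientAddGroup.eq_zero_iff]
    exact AddSubgroup.subset_closure ⟨q, u (p i), unopFunctional (f i), rfl⟩

/-- The trace in terms of a dual basis. Bijectivity of `φ_P` makes `Function.invFun` its genuine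
inverse here. -/
lemma hsTr_eq_sum (h : IsDualBasis p f) (g : P →ₗ[Bᵐᵒᵖ] P) :
    hsTr B P g = QuotientAddGroup.mk (∑ i, unop (f i (g (p i)))) := by
  have hinv : Function.invFun (hsPhi B P) g = hsPhiInv p f g := by
    rw [← hsPhiInv_hsPhi h (Function.invFun (hsPhi B P) g),
      Function.invFun_eq ⟨_, hsPhi_hsPhiInv h g⟩]
  rw [hsTr, hinv]
  change TensorProduct.lift (hsPsiBil B P) _ = _
  rw [map_sum, HH0_mk_sum]
  simp

lemma IsDualBasis.finite (h : IsDualBasis p f) : Module.Finite Bᵐᵒᵖ P :=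
  Module.Finite.of_surjective (Fintype.linearCombination Bᵐᵒᵖ p) fun x =>
    ⟨fun i => f i x, by simpa [Fintype.linearCombination_apply] using h x⟩

lemma IsDualBasis.projective (h : IsDualBasis p f) : Module.Projective Bᵐᵒᵖ P :=
  Module.Projective.of_split (LinearMap.pi f) (Fintype.linearCombination Bᵐᵒᵖ p) <| by
    ext x
    simpa [Fintype.linearCombination_apply] using h x

end DualBasis

/-! ### Trace property and additivity -/

section Trace

variable {B : Type*} [Ring B]
variable {P : Type*} [AddCommGroup P] [Module Bᵐᵒᵖ P]
  [Module.Finite Bᵐᵒᵖ P] [Module.Projective Bᵐᵒᵖ P]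

variable (B P) in
lemma exists_isDualBasis :
    ∃ (n : ℕ) (p : Fin n → P) (f : Fin n → P →ₗ[Bᵐᵒᵖ] Bᵐᵒᵖ), IsDualBasis p f := by
  obtain ⟨n, r, s, -, -, hrs⟩ := Module.Finite.exists_comp_eq_id_of_projective Bᵐᵒᵖ P
  refine ⟨n, fun i => r (Pi.single i 1), fun i => LinearMap.proj i ∘ₗ s, fun x => ?_⟩
  conv_rhs => rw [← LinearMap.id_apply (R := Bᵐᵒᵖ) x, ← hrs, LinearMap.comp_apply,
    pi_eq_sum_univ' (s x), map_sum]
  refine Finset.sum_congr rfl fun i _ => ?_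
  rw [map_smul]
  rfl

lemma hsTr_add (g g' : P →ₗ[Bᵐᵒᵖ] P) : hsTr B P (g + g') = hsTr B P g + hsTr B P g' := by
  obtain ⟨n, p, f, h⟩ := exists_isDualBasis B P
  simp only [hsTr_eq_sum h, LinearMap.add_apply, map_add, unop_add, Finset.sum_add_distrib,
    QuotientAddGroup.mk_add]

lemma hsTr_comp_comm_s16 {P' : Type*} [AddCommGroup P'] [Module Bᵐᵒᵖ P']
    [Module.Finite Bᵐᵒᵖ P'] [Module.Projective Bᵐᵒᵖ P']
    (g : P →ₗ[Bᵐᵒᵖ] P') (g' : P' →ₗ[Bᵐᵒᵖ] P) :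
    hsTr B P (g' ∘ₗ g) = hsTr B P' (g ∘ₗ g') := by
  obtain ⟨n, p, f, h⟩ := exists_isDualBasis B P
  obtain ⟨n', p', f', h'⟩ := exists_isDualBasis B P'
  have h1 : ∀ i, unop (f i (g' (g (p i)))) =
      ∑ j, unop (f i (g' (p' j))) * unop (f' j (g (p i))) := by
    intro i
    conv_lhs => rw [← h' (g (p i))]
    simp
  have h2 : ∀ j, unop (f' j (g (g' (p' j)))) =
      ∑ i, unop (f' j (g (p i))) * unop (f i (g' (p' j))) := by
    intro j
    conv_lhs => rw [← h (g' (p' j))]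
    simp
  rw [hsTr_eq_sum h, hsTr_eq_sum h']
  simp only [LinearMap.comp_apply, h1, h2, HH0_mk_sum]
  rw [Finset.sum_comm]
  exact Finset.sum_congr rfl fun j _ => Finset.sum_congr rfl fun i _ => HH0_mk_mul_comm _ _

/-- In a short exact sequence with finitely generated projective middle term and projective
quotient, the kernel is finitely generated projective and the trace is additive. The sequence
splits, `id = i ∘ r + s ∘ t`, and the trace property moves the two halves to the outer terms. -/
lemma hsTr_of_exact {P' P'' : Type*} [AddCommGroup P'] [Module Bᵐᵒᵖ P']
    [AddCommGroup P''] [Module Bᵐᵒᵖ P''] [Module.Projective Bᵐᵒᵖ P'']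
    (i : P' →ₗ[Bᵐᵒᵖ] P) (t : P →ₗ[Bᵐᵒᵖ] P'') (hi : Function.Injective i)
    (ht : Function.Surjective t) (hit : LinearMap.range i = LinearMap.ker t) :
    Module.Finite Bᵐᵒᵖ P' ∧ Module.Projective Bᵐᵒᵖ P' ∧
    ∀ (l' : P' →ₗ[Bᵐᵒᵖ] P') (l : P →ₗ[Bᵐᵒᵖ] P) (l'' : P'' →ₗ[Bᵐᵒᵖ] P''),
      l ∘ₗ i = i ∘ₗ l' → t ∘ₗ l = l'' ∘ₗ t → hsTr B P l = hsTr B P' l' + hsTr B P'' l'' := by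
  obtain ⟨s, hs⟩ := t.exists_rightInverse_of_surjective (LinearMap.range_eq_top.2 ht)
  have hs' : ∀ x, t (s x) = x := fun x => LinearMap.congr_fun hs x
  have hker : ∀ x, x - s (t x) ∈ LinearMap.range i := fun x => by
    rw [hit, LinearMap.mem_ker, map_sub, hs', sub_self]
  let r : P →ₗ[Bᵐᵒᵖ] P' := (LinearEquiv.ofInjective i hi).symm.toLinearMap ∘ₗ
    LinearMap.codRestrict (LinearMap.range i) (LinearMap.id - s ∘ₗ t) hker
  have hr : ∀ x, i (r x) = x - s (t x) := fun x =>
    LinearEquiv.ofInjective_symm_apply (f := i) (h := hi) ⟨x - s (t x), hker x⟩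
  have hti : ∀ x, t (i x) = 0 := fun x => by
    rw [← LinearMap.mem_ker, ← hit]; exact ⟨x, rfl⟩
  have hri : r ∘ₗ i = LinearMap.id := by
    ext x
    apply hi
    simp [hr, hti]
  have : Module.Finite Bᵐᵒᵖ P' :=
    Module.Finite.of_surjective r fun x => ⟨i x, LinearMap.congr_fun hri x⟩
  have : Module.Projective Bᵐᵒᵖ P' := Module.Projective.of_split i r hri
  have : Module.Finite Bᵐᵒᵖ P'' := Module.Finite.of_surjective t ht
  refine ⟨inferInstance, inferInstance, fun l' l l'' h' h'' => ?_⟩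
  have hl : l = (i ∘ₗ l') ∘ₗ r + (l ∘ₗ s) ∘ₗ t := by
    ext x
    rw [← h']
    simp [hr]
  calc hsTr B P l = hsTr B P ((i ∘ₗ l') ∘ₗ r) + hsTr B P ((l ∘ₗ s) ∘ₗ t) := by
        rw [← hsTr_add, ← hl]
    _ = hsTr B P' ((l' ∘ₗ r) ∘ₗ i) + hsTr B P'' (t ∘ₗ l ∘ₗ s) := by
        rw [LinearMap.comp_assoc, hsTr_comp_comm_s16 i, hsTr_comp_comm_s16 t]
    _ = hsTr B P' l' + hsTr B P'' l'' := by
        rw [LinearMap.comp_assoc, hri, LinearMap.comp_id, ← LinearMap.comp_assoc, h'',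
          LinearMap.comp_assoc, hs, LinearMap.comp_id]

end Trace

/-! ### Left multiplication on projective bimodules -/

section Bimodule

variable {k : Type*} [Field k] {A : Type*} [Ring A] [Algebra k A]
variable {B : Type*} [Ring B] [Algebra k B]

/-- A bimodule homomorphism, regarded as a homomorphism of right `B`-modules. -/
def restrictRight {X Y : Type*} [AddCommGroup X] [Module (A ⊗[k] Bᵐᵒᵖ) X] [Module Bᵐᵒᵖ X]
    [AddCommGroup Y] [Module (A ⊗[k] Bᵐᵒᵖ) Y] [Module Bᵐᵒᵖ Y]
    (hX : ∀ (b : Bᵐᵒᵖ) (x : X), b • x = ((1 : A) ⊗ₜ[k] b : A ⊗[k] Bᵐᵒᵖ) • x)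
    (hY : ∀ (b : Bᵐᵒᵖ) (y : Y), b • y = ((1 : A) ⊗ₜ[k] b : A ⊗[k] Bᵐᵒᵖ) • y)
    (u : X →ₗ[A ⊗[k] Bᵐᵒᵖ] Y) : X →ₗ[Bᵐᵒᵖ] Y where
  toFun := u
  map_add' := map_add u
  map_smul' b x := by rw [hX, map_smul, RingHom.id_apply, hY]

/-- The map `l_a`: left multiplication by `a`, as an endomorphism of the right `B`-module. -/
def leftMulRight {X : Type*} [AddCommGroup X] [Module (A ⊗[k] Bᵐᵒᵖ) X] [Module Bᵐᵒᵖ X]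
    (hX : ∀ (b : Bᵐᵒᵖ) (x : X), b • x = ((1 : A) ⊗ₜ[k] b : A ⊗[k] Bᵐᵒᵖ) • x) (a : A) :
    X →ₗ[Bᵐᵒᵖ] X where
  toFun x := (a ⊗ₜ[k] (1 : Bᵐᵒᵖ) : A ⊗[k] Bᵐᵒᵖ) • x
  map_add' := smul_add _
  map_smul' b x := by
    simp only [hX, smul_smul, Algebra.TensorProduct.tmul_mul_tmul, RingHom.id_apply,
      one_mul, mul_one]

variable (B) in
/-- The slice map `φ ⊗ id : A ⊗ Bᵐᵒᵖ → Bᵐᵒᵖ` of a `k`-linear functional `φ` on `A`. -/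
noncomputable def slice (φ : A →ₗ[k] k) : A ⊗[k] Bᵐᵒᵖ →ₗ[k] Bᵐᵒᵖ :=
  (TensorProduct.lid k Bᵐᵒᵖ).toLinearMap ∘ₗ LinearMap.rTensor Bᵐᵒᵖ φ

@[simp] lemma slice_tmul (φ : A →ₗ[k] k) (x : A) (b : Bᵐᵒᵖ) :
    slice B φ (x ⊗ₜ b) = φ x • b := by
  simp [slice]

lemma slice_one_tmul_mul (φ : A →ₗ[k] k) (b : Bᵐᵒᵖ) (t : A ⊗[k] Bᵐᵒᵖ) :
    slice B φ ((1 : A) ⊗ₜ[k] b * t) = b * slice B φ t := by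
  induction t using TensorProduct.induction_on with
  | zero => simp
  | tmul x c => simp
  | add s t hs ht => rw [mul_add, map_add, map_add, hs, ht, mul_add]

/-- The slices of `t` along a `k`-basis `x` of `A` are its coordinates in the right `B`-basis
`x j ⊗ 1` of `A ⊗ Bᵐᵒᵖ`. -/
lemma sum_slice_coord {m : Type*} [Fintype m] (x : Module.Basis m k A) (t : A ⊗[k] Bᵐᵒᵖ) :
    ∑ j, (1 : A) ⊗ₜ[k] slice B (x.coord j) t * x j ⊗ₜ[k] (1 : Bᵐᵒᵖ) = t := by
  induction t using TensorProduct.induction_on with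
  | zero => simp
  | tmul y c =>
    conv_rhs => rw [← x.sum_repr y, TensorProduct.sum_tmul]
    refine Finset.sum_congr rfl fun j _ => ?_
    rw [slice_tmul, x.coord_apply, Algebra.TensorProduct.tmul_mul_tmul, one_mul, mul_one,
      TensorProduct.smul_tmul]
  | add s t hs ht =>
    simp only [map_add, TensorProduct.tmul_add, add_mul, Finset.sum_add_distrib, hs, ht]

lemma isNilpotent_of_mem_jacobson [FiniteDimensional k A] {a : A}
    (ha : a ∈ (⊥ : Ideal A).jacobson) : IsNilpotent a := by
  have : IsArtinianRing A := IsArtinianRing.of_finite k A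
  obtain ⟨n, hn⟩ := IsArtinianRing.isNilpotent_jacobson_bot (R := A)
  exact ⟨n, by simpa [hn] using Ideal.pow_mem_pow ha n⟩

/-- On a pure tensor `a' ⊗ b` the sum is the trace of the `k`-linear map `x ↦ a x a'` times `b`;
this map is nilpotent, being the product of the commuting maps `x ↦ a x` and `x ↦ x a'`. -/
lemma sum_slice_leftMul_eq_zero {m : Type*} [Fintype m] (x : Module.Basis m k A)
    {a : A} (ha : IsNilpotent a) (c : A ⊗[k] Bᵐᵒᵖ) :
    ∑ j, slice B (x.coord j) ((a * x j) ⊗ₜ[k] (1 : Bᵐᵒᵖ) * c) = 0 := by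
  classical
  induction c using TensorProduct.induction_on with
  | zero => simp
  | add s t hs ht => simp only [mul_add, map_add, Finset.sum_add_distrib, hs, ht, add_zero]
  | tmul a' b =>
    have hnil : IsNilpotent (LinearMap.mulLeft k a * LinearMap.mulRight k a') :=
      (LinearMap.commute_mulLeft_right (R := k) a a').isNilpotent_mul_right
        (by simpa using ha)
    have htr : ∑ j, x.coord j (a * x j * a') = 0 := by
      have h0 := (LinearMap.isNilpotent_trace_of_isNilpotent hnil).eq_zero
      rw [LinearMap.trace_eq_matrix_trace k x, Matrix.trace] at h0
      simpa [LinearMap.toMatrix_apply, mul_assoc] using h0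
    simp only [Algebra.TensorProduct.tmul_mul_tmul, one_mul, slice_tmul]
    rw [← Finset.sum_smul, htr, zero_smul]

/-- A finitely generated projective bimodule is finitely generated projective on the right, because
`A ⊗ Bᵐᵒᵖ` is free over `Bᵐᵒᵖ` on a `k`-basis of `A`; nilpotent elements of `A` act on it with trace
zero. -/
lemma hsTr_leftMul_projective [FiniteDimensional k A]
    {Q : Type*} [AddCommGroup Q] [Module (A ⊗[k] Bᵐᵒᵖ) Q] [Module Bᵐᵒᵖ Q]
    (hQ : ∀ (b : Bᵐᵒᵖ) (q : Q), b • q = ((1 : A) ⊗ₜ[k] b : A ⊗[k] Bᵐᵒᵖ) • q)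
    [Module.Finite (A ⊗[k] Bᵐᵒᵖ) Q] [Module.Projective (A ⊗[k] Bᵐᵒᵖ) Q] :
    Module.Finite Bᵐᵒᵖ Q ∧ Module.Projective Bᵐᵒᵖ Q ∧
      ∀ a : A, IsNilpotent a → hsTr B Q (leftMulRight hQ a) = 0 := by
  obtain ⟨n, r, s, -, -, hrs⟩ := Module.Finite.exists_comp_eq_id_of_projective (A ⊗[k] Bᵐᵒᵖ) Q
  let x := Module.finBasis k A
  let e : Fin n → Q := fun j => r (Pi.single j 1)
  have he : ∀ q, ∑ j, s q j • e j = q := fun q => by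
    conv_rhs => rw [← LinearMap.id_apply (R := A ⊗[k] Bᵐᵒᵖ) q, ← hrs, LinearMap.comp_apply,
      pi_eq_sum_univ' (s q), map_sum]
    refine Finset.sum_congr rfl fun j _ => ?_
    rw [map_smul]
  let p : Fin n × Fin (Module.finrank k A) → Q := fun i =>
    (x i.2 ⊗ₜ[k] (1 : Bᵐᵒᵖ) : A ⊗[k] Bᵐᵒᵖ) • e i.1
  let f : Fin n × Fin (Module.finrank k A) → Q →ₗ[Bᵐᵒᵖ] Bᵐᵒᵖ := fun i =>
    { toFun := fun q => slice B (x.coord i.2) (s q i.1)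
      map_add' := fun q q' => by rw [map_add, Pi.add_apply, map_add]
      map_smul' := fun b q => by
        rw [hQ, map_smul, Pi.smul_apply, smul_eq_mul, slice_one_tmul_mul]
        rfl }
  have h : IsDualBasis p f := fun q => by
    conv_rhs => rw [← he q]
    rw [Fintype.sum_prod_type]
    refine Finset.sum_congr rfl fun j _ => ?_
    conv_rhs => rw [← sum_slice_coord x (s q j), Finset.sum_smul]
    refine Finset.sum_congr rfl fun l _ => ?_
    rw [hQ, smul_smul]
    rfl
  refine ⟨h.finite, h.projective, fun a ha => ?_⟩
  have hsum : ∑ i, f i (leftMulRight hQ a (p i)) = 0 := by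
    rw [Fintype.sum_prod_type]
    refine Finset.sum_eq_zero fun j _ => ?_
    rw [← sum_slice_leftMul_eq_zero x ha (s (e j) j)]
    refine Finset.sum_congr rfl fun l _ => ?_
    change slice B (x.coord l) (s ((a ⊗ₜ[k] (1 : Bᵐᵒᵖ) : A ⊗[k] Bᵐᵒᵖ) •
      (x l ⊗ₜ[k] (1 : Bᵐᵒᵖ) : A ⊗[k] Bᵐᵒᵖ) • e j) j) = _
    rw [smul_smul, map_smul, Pi.smul_apply, smul_eq_mul, Algebra.TensorProduct.tmul_mul_tmul,
      one_mul]
  rw [hsTr_eq_sum h, ← Finset.unop_sum, hsum, unop_zero, QuotientAddGroup.mk_zero]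

end Bimodule

/-! ### Induction along the resolution -/

open TensorProduct in
/-- Let `k` be a field, `A`, `B` finite-dimensional `k`-algebras, `M` a
finitely generated `A`-`B`-bimodule (a module over `A ⊗ₖ Bᵒᵖ`) which is projective as a right
`B`-module, and `P•` a resolution of `M` by finitely generated projective `A`-`B`-bimodules
`Q i`, with syzygies `Ω i` (so `Ω 0 ≅ M` and there are short exact sequences
`0 → Ω (i+1) → Q i → Ω i → 0` of bimodules).  Then for every `a` in the Jacobson radical of
`A` and every `i`, `tr_{M_B}(l_a) = (−1)ⁱ tr_{Ω i}(l_a)` in `B/[B,B]`, where `l_a` denotes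
left multiplication by `a` (the action of `a ⊗ 1`) as a right `B`-module endomorphism. -/
theorem hsTr_leftMul_syzygy
    (k : Type*) [Field k] (A : Type*) [Ring A] [Algebra k A] [FiniteDimensional k A]
    (B : Type*) [Ring B] [Algebra k B] [FiniteDimensional k B]
    (M : Type*) [AddCommGroup M] [Module (A ⊗[k] Bᵐᵒᵖ) M] [Module.Finite (A ⊗[k] Bᵐᵒᵖ) M]
    [Module Bᵐᵒᵖ M]
    (hresM : ∀ (b : Bᵐᵒᵖ) (p : M), b • p = (((1 : A) ⊗ₜ[k] b : A ⊗[k] Bᵐᵒᵖ)) • p)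
    [Module.Projective Bᵐᵒᵖ M]
    (Ω : ℕ → Type*) [∀ i, AddCommGroup (Ω i)] [∀ i, Module (A ⊗[k] Bᵐᵒᵖ) (Ω i)]
    [∀ i, Module Bᵐᵒᵖ (Ω i)]
    (hresΩ : ∀ (i : ℕ) (b : Bᵐᵒᵖ) (p : Ω i), b • p = (((1 : A) ⊗ₜ[k] b : A ⊗[k] Bᵐᵒᵖ)) • p)
    (Q : ℕ → Type*) [∀ i, AddCommGroup (Q i)] [∀ i, Module (A ⊗[k] Bᵐᵒᵖ) (Q i)]
    [∀ i, Module.Finite (A ⊗[k] Bᵐᵒᵖ) (Q i)] [∀ i, Module.Projective (A ⊗[k] Bᵐᵒᵖ) (Q i)]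
    (e₀ : Ω 0 ≃ₗ[A ⊗[k] Bᵐᵒᵖ] M)
    (ι : ∀ i, Ω (i + 1) →ₗ[A ⊗[k] Bᵐᵒᵖ] Q i) (τ : ∀ i, Q i →ₗ[A ⊗[k] Bᵐᵒᵖ] Ω i)
    (hι : ∀ i, Function.Injective (ι i)) (hτ : ∀ i, Function.Surjective (τ i))
    (hexact : ∀ i, LinearMap.range (ι i) = LinearMap.ker (τ i))
    (a : A) (ha : a ∈ (⊥ : Ideal A).jacobson) (i : ℕ)
    (laM : M →ₗ[Bᵐᵒᵖ] M) (hlaM : ∀ p : M, laM p = ((a ⊗ₜ[k] (1 : Bᵐᵒᵖ) : A ⊗[k] Bᵐᵒᵖ)) • p)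
    (laΩ : Ω i →ₗ[Bᵐᵒᵖ] Ω i)
    (hlaΩ : ∀ p : Ω i, laΩ p = ((a ⊗ₜ[k] (1 : Bᵐᵒᵖ) : A ⊗[k] Bᵐᵒᵖ)) • p) :
    hsTr B M laM = ((-1 : ℤ) ^ i) • hsTr B (Ω i) laΩ := by
  have hnil : IsNilpotent a := isNilpotent_of_mem_jacobson (k := k) ha
  -- each `Q i` is a right `B`-module through the bimodule structure
  let instQ : ∀ i, Module Bᵐᵒᵖ (Q i) := fun i =>
    Module.compHom (Q i)
      (Algebra.TensorProduct.includeRight : Bᵐᵒᵖ →ₐ[k] A ⊗[k] Bᵐᵒᵖ).toRingHom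
  have hresQ : ∀ (i : ℕ) (b : Bᵐᵒᵖ) (q : Q i),
      b • q = ((1 : A) ⊗ₜ[k] b : A ⊗[k] Bᵐᵒᵖ) • q := fun _ _ _ => rfl
  -- dimension shift along `0 → Ω (i + 1) → Q i → Ω i → 0`, the middle trace being zero
  have hstep : ∀ i, Module.Projective Bᵐᵒᵖ (Ω i) →
      Module.Finite Bᵐᵒᵖ (Ω i) ∧ Module.Projective Bᵐᵒᵖ (Ω (i + 1)) ∧
        hsTr B (Ω i) (leftMulRight (hresΩ i) a) =
          -hsTr B (Ω (i + 1)) (leftMulRight (hresΩ (i + 1)) a) := by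
    intro i hi
    obtain ⟨hQf, hQp, hQ0⟩ := hsTr_leftMul_projective (hresQ i)
    obtain ⟨-, hp, htr⟩ := hsTr_of_exact (restrictRight (hresΩ (i + 1)) (hresQ i) (ι i))
      (restrictRight (hresQ i) (hresΩ i) (τ i)) (hι i) (hτ i)
      (SetLike.ext fun q => SetLike.ext_iff.1 (hexact i) q)
    refine ⟨Module.Finite.of_surjective (restrictRight (hresQ i) (hresΩ i) (τ i)) (hτ i), hp, ?_⟩
    rw [← add_eq_zero_iff_eq_neg, add_comm, ← htr _ (leftMulRight (hresQ i) a) _ ?_ ?_, hQ0 a hnil]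
    · ext x
      exact (map_smul (ι i) _ x).symm
    · ext q
      exact map_smul (τ i) _ q
  let u := restrictRight (hresΩ 0) hresM e₀.toLinearMap
  let v := restrictRight hresM (hresΩ 0) e₀.symm.toLinearMap
  have huv : u ∘ₗ v = LinearMap.id := LinearMap.ext e₀.apply_symm_apply
  have hvu : v ∘ₗ u = LinearMap.id := LinearMap.ext e₀.symm_apply_apply
  have hproj0 : Module.Projective Bᵐᵒᵖ (Ω 0) := Module.Projective.of_split u v hvu
  have hfin0 : Module.Finite Bᵐᵒᵖ (Ω 0) := (hstep 0 hproj0).1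
  have hfinM : Module.Finite Bᵐᵒᵖ M := Module.Finite.of_surjective u e₀.surjective
  have h0 : hsTr B M laM = hsTr B (Ω 0) (leftMulRight (hresΩ 0) a) := by
    have hla : v ∘ₗ laM = leftMulRight (hresΩ 0) a ∘ₗ v := by
      ext x
      change e₀.symm (laM x) = _
      rw [hlaM, map_smul]
      rfl
    calc hsTr B M laM = hsTr B M (u ∘ₗ v ∘ₗ laM) := by
          rw [← LinearMap.comp_assoc, huv, LinearMap.id_comp]
      _ = _ := by rw [hsTr_comp_comm_s16, hla, LinearMap.comp_assoc, hvu, LinearMap.comp_id]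
  have hind : ∀ i, Module.Projective Bᵐᵒᵖ (Ω i) ∧
      hsTr B M laM = ((-1 : ℤ) ^ i) • hsTr B (Ω i) (leftMulRight (hresΩ i) a) := by
    intro i
    induction i with
    | zero => exact ⟨hproj0, by rw [pow_zero, one_smul, h0]⟩
    | succ i ih =>
      obtain ⟨-, hp, htr⟩ := hstep i ih.1
      exact ⟨hp, by rw [ih.2, htr, pow_succ, mul_neg_one, zsmul_neg, neg_zsmul]⟩
  have hlast : laΩ = leftMulRight (hresΩ i) a := LinearMap.ext hlaΩ
  rw [hlast]
  exact (hind i).2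
end
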